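/- For every injective holomorphic map φ : U → ℂ with φ(0) = 0 and φ′(0) = 1, the image of the critical point −1/3 of P satisfies 0.22 ≤ |φ(−1/3)| ≤ 2; equivalently, the critical point of any map f = P ∘ φ^{−1} in the Inou–Shishikura class lies in the closed disk of radius 2 about 0 but outside the open disk of radius 0.22 about 0. -/

import Mathlib

open Complex

/-- The cubic polynomial `P(z) = z(1+z)²`. -/
noncomputable def Pcubic (z : ℂ) : ℂ := z * (1 + z) ^ 2

/-- The connected component of `P⁻¹(D(0,(4/27)e^{-4π}))` containing `-1`. -/
noncomputable def Bcomp : Set ℂ :=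
  connectedComponentIn (Pcubic ⁻¹' Metric.ball 0 ((4 / 27) * Real.exp (-(4 * Real.pi)))) (-1)

/-- The Inou–Shishikura domain
`U = P⁻¹(D(0,(4/27)e^{4π})) ∖ ((-∞,-1] ∪ B)`. -/
noncomputable def Udom : Set ℂ :=
  (Pcubic ⁻¹' Metric.ball 0 ((4 / 27) * Real.exp (4 * Real.pi))) \
    ({z : ℂ | z.im = 0 ∧ z.re ≤ -1} ∪ Bcomp)

/-!
The disc `ball (9/10) (9/5)` lies in `U`, so `φ` restricts to a univalent function `f` of that disc.
Rescaled to the unit disc, `f` is normalised and the point `-1/3` moves close to the origin, where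
univalence pins down `|f z|`: writing `f z = z / (1 + z q z)²`, the map `z⁻¹ + z q(z²)` is univalent
in the punctured disc, and the area theorem bounds the coefficients of `q` in `ℓ²`, hence `q` itself
by Cauchy–Schwarz.

The area theorem compares areas of images of annuli `ρ < |z| < r` as `ρ → 0`. The image of
`|z| = ρ` is an ellipse up to `O(ρ²)`, which a real-linear map `w ↦ w - β conj w` turns into a
circle; so the area it encloses is bounded above by that of a disc, with no need for Jordan curves.
-/

section Topology

open Metric Set Filter Topology

theorem connectedComponentIn_subset_ball_of_disjoint_sphere {X : Type*} [PseudoMetricSpace X]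
    {F : Set X} {x : X} {r : ℝ} (hr : 0 < r) (hF : Disjoint (sphere x r) F) :
    connectedComponentIn F x ⊆ ball x r := by
  by_cases hx : x ∈ F
  swap
  · simp [connectedComponentIn_eq_empty hx]
  refine isPreconnected_connectedComponentIn.subset_of_closure_inter_subset isOpen_ball
    ⟨x, mem_connectedComponentIn hx, mem_ball_self hr⟩ ?_
  rintro y ⟨hy, hyF⟩
  have hy_le := closure_ball_subset_closedBall hy
  have hy_ne : y ∉ sphere x r := fun h ↦
    hF.notMem_of_mem_left h (connectedComponentIn_subset _ _ hyF)
  exact lt_of_le_of_ne hy_le hy_ne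

theorem isPreconnected_compl_closedBall {E : Type*} [NormedAddCommGroup E] [NormedSpace ℝ E]
    (h : 1 < Module.rank ℝ E) (c : E) (r : ℝ) : IsPreconnected (closedBall c r)ᶜ := by
  rcases lt_or_ge r 0 with hr | hr
  · simpa [closedBall_eq_empty.2 hr] using isPreconnected_univ (α := E)
  have himage : (fun p : ℝ × E ↦ c + p.1 • p.2) '' (Ioi r ×ˢ sphere 0 1) = (closedBall c r)ᶜ := by
    ext x
    simp only [mem_image, mem_prod, mem_Ioi, mem_sphere_zero_iff_norm, Prod.exists, mem_compl_iff,
      mem_closedBall, not_le, dist_eq_norm]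
    constructor
    · rintro ⟨t, v, ⟨ht, hv⟩, rfl⟩
      simpa [norm_smul, hv, abs_of_nonneg (hr.trans ht.le)] using ht
    · intro hx
      have hx0 : ‖x - c‖ ≠ 0 := (hr.trans_lt hx).ne'
      refine ⟨‖x - c‖, ‖x - c‖⁻¹ • (x - c), ⟨hx, ?_⟩, ?_⟩
      · simp [norm_smul, hx0]
      · simp [smul_smul, hx0]
  rw [← himage]
  exact (isPreconnected_Ioi.prod (isPreconnected_sphere h 0 1)).image _ (by fun_prop)


theorem isOpen_image_of_injOn {g : ℂ → ℂ} {U : Set ℂ} (hU : IsOpen U)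
    (hg : DifferentiableOn ℂ g U) (hinj : InjOn g U) : IsOpen (g '' U) := by
  rw [isOpen_iff_mem_nhds]
  rintro _ ⟨z, hz, rfl⟩
  have hUz : U ∈ 𝓝 z := hU.mem_nhds hz
  rcases (hg.analyticAt hUz).eventually_constant_or_nhds_le_map_nhds with hconst | hmap
  · have heq : ∀ᶠ w in 𝓝[≠] z, w = z := by
      filter_upwards [nhdsWithin_le_nhds hconst, nhdsWithin_le_nhds hUz] with w hw hwU
      exact hinj hwU hz hw
    obtain ⟨w, hwz, hw_ne⟩ := (heq.and eventually_mem_nhdsWithin).exists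
    exact absurd hwz hw_ne
  · exact hmap (image_mem_map hUz)

theorem isClosed_image_diff_singleton_of_tendsto_cobounded {X Y : Type*} [TopologicalSpace X]
    [MetricSpace Y] {g : X → Y} {S : Set X} {c : X} (hS : IsCompact S)
    (hg : ∀ z ∈ S \ {c}, ContinuousAt g z) (hpole : Tendsto g (𝓝[≠] c) (Bornology.cobounded Y)) :
    IsClosed (g '' (S \ {c})) := by
  refine isClosed_of_closure_subset fun w hw ↦ ?_
  obtain ⟨u, hu, huw⟩ := mem_closure_iff_ultrafilter.1 hw
  let v := Ultrafilter.ofComapInfPrincipal hu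
  have hvS : S \ {c} ∈ v := Ultrafilter.ofComapInfPrincipal_mem hu
  have hvw : Tendsto g v (𝓝 w) := by
    rwa [Tendsto, ← Ultrafilter.coe_map, Ultrafilter.ofComapInfPrincipal_eq_of_map hu]
  obtain ⟨z, hz, hvz⟩ := hS.ultrafilter_le_nhds v
    (le_principal_iff.2 (mem_of_superset hvS sdiff_subset))
  have hzc : z ≠ c := by
    rintro rfl
    have hv : (v : Filter X) ≤ 𝓝[≠] z :=
      le_inf hvz (le_principal_iff.2 (mem_of_superset hvS fun _ h ↦ h.2))
    exact hvw.not_tendsto (disjoint_nhds_cobounded w) (hpole.mono_left hv)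
  exact ⟨z, ⟨hz, hzc⟩, tendsto_nhds_unique ((hg z ⟨hz, hzc⟩).tendsto.mono_left hvz) hvw⟩

theorem mapsTo_diff_ball_of_tendsto_cobounded {g : ℂ → ℂ} {U K : Set ℂ} {c : ℂ} {ρ : ℝ}
    (hρ : 0 < ρ) (hU : IsOpen U) (hρU : closedBall c ρ ⊆ U)
    (hg : DifferentiableOn ℂ g (U \ {c})) (hinj : InjOn g (U \ {c}))
    (hpole : Tendsto g (𝓝[≠] c) (Bornology.cobounded ℂ)) (hK : Bornology.IsBounded K)
    (hKc : IsPreconnected Kᶜ) (hsphere : MapsTo g (sphere c ρ) K) :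
    MapsTo g (U \ ball c ρ) K := by
  have hU' : IsOpen (U \ {c}) := hU.sdiff isClosed_singleton
  have hball : ball c ρ \ {c} ⊆ U \ {c} :=
    sdiff_subset_sdiff_left (ball_subset_closedBall.trans hρU)
  have hopen : IsOpen (g '' (ball c ρ \ {c})) :=
    isOpen_image_of_injOn (isOpen_ball.sdiff isClosed_singleton) (hg.mono hball) (hinj.mono hball)
  have hclosed : IsClosed (g '' (closedBall c ρ \ {c})) :=
    isClosed_image_diff_singleton_of_tendsto_cobounded (isCompact_closedBall c ρ)
      (fun z hz ↦ (hg.differentiableAt (hU'.mem_nhds ⟨hρU hz.1, hz.2⟩)).continuousAt) hpole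
  have hmeet : (Kᶜ ∩ g '' (ball c ρ \ {c})).Nonempty := by
    obtain ⟨z, hzK, hz⟩ := ((hpole.eventually (Bornology.isBounded_def.1 hK)).and
      (sdiff_mem_nhdsWithin_compl (ball_mem_nhds c hρ) {c})).exists
    exact ⟨g z, hzK, z, hz, rfl⟩
  have hKsub : Kᶜ ⊆ g '' (ball c ρ \ {c}) := by
    refine hKc.subset_of_closure_inter_subset hopen hmeet ?_
    rintro w ⟨hw, hwK⟩
    obtain ⟨z, ⟨hz, hzc⟩, rfl⟩ :=
      closure_minimal (image_mono (sdiff_subset_sdiff_left ball_subset_closedBall)) hclosed hw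
    exact ⟨z, ⟨lt_of_le_of_ne hz fun h ↦ hwK (hsphere h), hzc⟩, rfl⟩
  rintro z ⟨hzU, hzρ⟩
  by_contra hzK
  obtain ⟨x, hx, hxz⟩ := hKsub hzK
  have hzc : z ≠ c := fun h ↦ hzρ (h ▸ mem_ball_self hρ)
  exact hzρ (hinj (hball hx) ⟨hzU, hzc⟩ hxz ▸ hx.1)

end Topology

section AreaFormula

open Metric Set MeasureTheory

theorem abs_det_restrictScalars_toSpanSingleton (c : ℂ) :
    |((ContinuousLinearMap.toSpanSingleton ℂ c).restrictScalars ℝ : ℂ →L[ℝ] ℂ).det| = ‖c‖ ^ 2 := by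
  rw [ContinuousLinearMap.det, ContinuousLinearMap.coe_restrictScalars,
    LinearMap.det_restrictScalars, ← ContinuousLinearMap.det,
    ContinuousLinearMap.det_toSpanSingleton, Algebra.norm_complex_apply, normSq_eq_norm_sq,
    abs_of_nonneg (by positivity)]

theorem volume_image_of_injOn {g : ℂ → ℂ} {A : Set ℂ} (hA : MeasurableSet A)
    (hg : ∀ z ∈ A, DifferentiableAt ℂ g z) (hinj : InjOn g A) :
    volume (g '' A) = ∫⁻ z in A, ENNReal.ofReal (‖deriv g z‖ ^ 2) := by
  simp only [← abs_det_restrictScalars_toSpanSingleton]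
  exact (lintegral_abs_det_fderiv_eq_addHaar_image volume hA (fun z hz ↦
    ((hg z hz).hasDerivAt.hasFDerivAt.restrictScalars ℝ).hasFDerivWithinAt) hinj).symm

theorem lintegral_Ioo_circleMap {f : ℂ → ℝ} {t : ℝ} (hf : CircleIntegrable f 0 t)
    (hf0 : ∀ z, 0 ≤ f z) :
    ∫⁻ θ in Ioo (-Real.pi) Real.pi, ENNReal.ofReal (f (circleMap 0 t θ)) =
      ENNReal.ofReal (2 * Real.pi * Real.circleAverage f 0 t) := by
  have hle : -Real.pi ≤ Real.pi := by linarith [Real.pi_pos]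
  have hint : IntervalIntegrable (fun θ ↦ f (circleMap 0 t θ)) volume (-Real.pi) Real.pi :=
    ((periodic_circleMap 0 t).comp f).intervalIntegrable₀ Real.two_pi_pos.ne' hf _ _
  rw [← ofReal_integral_eq_lintegral_ofReal
    ((intervalIntegrable_iff_integrableOn_Ioo_of_le hle).1 hint) (.of_forall fun _ ↦ hf0 _),
    ← integral_Ioc_eq_integral_Ioo, ← intervalIntegral.integral_of_le hle,
    Real.circleAverage_eq_integral_add (-Real.pi), smul_eq_mul, mul_inv_cancel_left₀
    Real.two_pi_pos.ne', intervalIntegral.integral_comp_add_right fun θ ↦ f (circleMap 0 t θ)]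
  congr 2 <;> ring

theorem lintegral_norm_preimage {f : ℂ → ℝ} {S : Set ℝ} (hS : MeasurableSet S) (hS0 : S ⊆ Ioi 0)
    (hfm : Measurable f) (hf0 : ∀ z, 0 ≤ f z) (hf : ∀ t ∈ S, CircleIntegrable f 0 t) :
    ∫⁻ z in norm ⁻¹' S, ENNReal.ofReal (f z) =
      ∫⁻ t in S, ENNReal.ofReal (t * (2 * Real.pi * Real.circleAverage f 0 t)) := by
  have hSn : MeasurableSet (norm ⁻¹' S : Set ℂ) := measurable_norm hS
  let F : ℂ → ENNReal := (norm ⁻¹' S).indicator fun z ↦ ENNReal.ofReal (f z)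
  have hF : Measurable F := hfm.ennreal_ofReal.indicator hSn
  have hsymm (q : ℝ × ℝ) : Complex.polarCoord.symm q = circleMap 0 q.1 q.2 := by
    rw [Complex.polarCoord_symm_apply, circleMap, exp_mul_I, zero_add, ofReal_cos, ofReal_sin]
  have hmem {t : ℝ} (ht : 0 < t) (θ : ℝ) : circleMap 0 t θ ∈ (norm ⁻¹' S : Set ℂ) ↔ t ∈ S := by
    rw [mem_preimage, norm_circleMap_zero, abs_of_pos ht]
  calc ∫⁻ z in norm ⁻¹' S, ENNReal.ofReal (f z)
      = ∫⁻ t in Ioi 0, ∫⁻ θ in Ioo (-Real.pi) Real.pi,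
          ENNReal.ofReal t * F (circleMap 0 t θ) := by
        rw [← lintegral_indicator hSn, ← Complex.lintegral_comp_polarCoord_symm, polarCoord_target,
          Measure.volume_eq_prod, ← Measure.prod_restrict, lintegral_prod]
        · simp only [hsymm, smul_eq_mul, F]
        · simp only [hsymm]
          refine (Measurable.mul (by fun_prop) (hF.comp ?_)).aemeasurable
          unfold circleMap
          fun_prop
    _ = ∫⁻ t in Ioi 0, S.indicator (fun t ↦
          ENNReal.ofReal (t * (2 * Real.pi * Real.circleAverage f 0 t))) t := by
        refine setLIntegral_congr_fun measurableSet_Ioi fun t ht ↦ ?_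
        by_cases htS : t ∈ S
        · simp only [F, indicator_of_mem htS, indicator_of_mem ((hmem ht _).2 htS)]
          rw [lintegral_const_mul' _ _ ENNReal.ofReal_ne_top,
            lintegral_Ioo_circleMap (hf t htS) hf0, ← ENNReal.ofReal_mul (hS0 htS).le]
        · simp [F, indicator_of_notMem htS, indicator_of_notMem (mt (hmem ht _).1 htS)]
    _ = _ := by rw [setLIntegral_indicator hS, inter_eq_left.2 hS0]

theorem volume_image_annulus {g : ℂ → ℂ} {ρ r : ℝ} (hρ : 0 ≤ ρ)
    (hg : DifferentiableOn ℂ g (norm ⁻¹' Ioo ρ r)) (hinj : InjOn g (norm ⁻¹' Ioo ρ r)) :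
    volume (g '' (norm ⁻¹' Ioo ρ r)) = ∫⁻ t in Ioo ρ r,
      ENNReal.ofReal (t * (2 * Real.pi * Real.circleAverage (fun z ↦ ‖deriv g z‖ ^ 2) 0 t)) := by
  have hopen : IsOpen (norm ⁻¹' Ioo ρ r : Set ℂ) := isOpen_Ioo.preimage continuous_norm
  have hderiv : ContinuousOn (fun z ↦ ‖deriv g z‖ ^ 2) (norm ⁻¹' Ioo ρ r) :=
    (hg.deriv hopen).continuousOn.norm.pow 2
  rw [volume_image_of_injOn hopen.measurableSet (fun z hz ↦ hg.differentiableAt (hopen.mem_nhds hz))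
    hinj]
  refine lintegral_norm_preimage measurableSet_Ioo (fun t ht ↦ hρ.trans_lt ht.1)
    ((measurable_deriv g).norm.pow_const 2) (fun z ↦ by positivity) fun t ht ↦
    ContinuousOn.circleIntegrable (hρ.trans ht.1.le) (hderiv.mono fun z hz ↦ ?_)
  rwa [mem_preimage, mem_sphere_zero_iff_norm.1 hz]

end AreaFormula

section PowerSeries

open Metric Filter Topology

variable {a : ℕ → ℂ} {b : ℂ → ℂ} {R : ℝ}

theorem summable_norm_mul_pow (hb : ∀ z ∈ ball (0 : ℂ) R, HasSum (fun n ↦ a n * z ^ n) (b z))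
    {r : ℝ} (hr0 : 0 ≤ r) (hr : r < R) : Summable fun n ↦ ‖a n‖ * r ^ n := by
  have hmem : (r : ℂ) ∈ ball (0 : ℂ) R := by
    rwa [mem_ball_zero_iff, norm_real, Real.norm_of_nonneg hr0]
  refine (hb r hmem).summable.norm.congr fun n ↦ ?_
  rw [norm_mul, norm_pow, norm_real, Real.norm_of_nonneg hr0]

theorem differentiableAt_and_hasSum_mul_deriv
    (hb : ∀ z ∈ ball (0 : ℂ) R, HasSum (fun n ↦ a n * z ^ n) (b z)) {z : ℂ} (hz : z ∈ ball 0 R) :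
    DifferentiableAt ℂ b z ∧ HasSum (fun n : ℕ ↦ n * a n * z ^ n) (z * deriv b z) := by
  obtain ⟨r, hzr, hrR⟩ := exists_between (mem_ball_zero_iff.1 hz)
  have hu := summable_norm_mul_pow hb ((norm_nonneg z).trans hzr.le) hrR
  have hle (n : ℕ) (w : ℂ) (hw : w ∈ ball 0 r) : ‖a n * w ^ n‖ ≤ ‖a n‖ * r ^ n := by
    rw [norm_mul, norm_pow]
    gcongr
    exact (mem_ball_zero_iff.1 hw).le
  have hd (n : ℕ) : DifferentiableOn ℂ (fun w ↦ a n * w ^ n) (ball 0 r) := by fun_prop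
  have hzr' : ball 0 r ∈ 𝓝 z := isOpen_ball.mem_nhds (mem_ball_zero_iff.2 hzr)
  have heq : (fun w ↦ ∑' n, a n * w ^ n) =ᶠ[𝓝 z] b := by
    filter_upwards [hzr'] with w hw
    exact (hb w (ball_subset_ball hrR.le hw)).tsum_eq
  refine ⟨((differentiableOn_tsum_of_summable_norm hu hd isOpen_ball hle).differentiableAt
    hzr').congr_of_eventuallyEq heq.symm, ?_⟩
  have hsum := (hasSum_deriv_of_summable_norm hu hd isOpen_ball hle
    (mem_of_mem_nhds hzr')).mul_left z
  rw [heq.deriv_eq] at hsum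
  refine hsum.congr_fun fun n ↦ ?_
  rw [deriv_const_mul_field, deriv_pow_field]
  cases n with
  | zero => simp
  | succ n =>
    rw [Nat.add_sub_cancel, pow_succ]
    ring

theorem exists_norm_sub_sum_range_le
    (hb : ∀ z ∈ ball (0 : ℂ) R, HasSum (fun n ↦ a n * z ^ n) (b z)) (k : ℕ) {r : ℝ} (hr0 : 0 < r)
    (hr : r < R) :
    ∃ C, 0 ≤ C ∧ ∀ z, ‖z‖ ≤ r → ‖b z - ∑ n ∈ Finset.range k, a n * z ^ n‖ ≤ C * ‖z‖ ^ k := by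
  have hu : Summable fun n ↦ ‖a (n + k)‖ * r ^ n := by
    refine (((summable_nat_add_iff k).2 (summable_norm_mul_pow hb hr0.le hr)).div_const
      (r ^ k)).congr fun n ↦ ?_
    rw [pow_add, ← mul_assoc, mul_div_cancel_right₀ _ (by positivity)]
  refine ⟨∑' n, ‖a (n + k)‖ * r ^ n, tsum_nonneg fun n ↦ by positivity, fun z hz ↦ ?_⟩
  have htail := (hasSum_nat_add_iff' k).2 (hb z (mem_ball_zero_iff.2 (hz.trans_lt hr)))
  rw [← htail.tsum_eq]
  refine tsum_of_norm_bounded (hu.hasSum.mul_right _) fun n ↦ ?_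
  rw [norm_mul, norm_pow, pow_add, ← mul_assoc]
  gcongr

end PowerSeries

section Parseval

open Metric Filter Topology

theorem circleAverage_sq_norm_sum_mul_pow (s : Finset ℕ) (a : ℕ → ℂ) (t : ℝ) :
    Real.circleAverage (fun z ↦ ‖∑ n ∈ s, a n * z ^ n‖ ^ 2) 0 t =
      ∑ n ∈ s, ‖a n‖ ^ 2 * t ^ (2 * n) := by
  let p : Polynomial ℂ := ∑ n ∈ s, Polynomial.monomial n (a n * t ^ n)
  have hcoeff (n : ℕ) : p.coeff n = if n ∈ s then a n * t ^ n else 0 := by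
    simp [p, Polynomial.finsetSum_coeff, Polynomial.coeff_monomial]
  have hsupport : p.support ⊆ s := fun n hn ↦ by
    by_contra hns
    simp [hcoeff, hns] at hn
  calc Real.circleAverage (fun z ↦ ‖∑ n ∈ s, a n * z ^ n‖ ^ 2) 0 t
      = Real.circleAverage (fun z ↦ ‖p.eval z‖ ^ 2) 0 1 := by
        simp only [Real.circleAverage_def, circleMap, p, Polynomial.eval_finsetSum,
          Polynomial.eval_monomial, mul_pow, mul_assoc, zero_add, ofReal_one, one_mul]
    _ = ∑ n ∈ p.support, ‖p.coeff n‖ ^ 2 := p.sum_sq_norm_coeff_eq_circleAverage.symm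
    _ = ∑ n ∈ s, ‖p.coeff n‖ ^ 2 := Finset.sum_subset hsupport fun n _ hn ↦ by
        simp [Polynomial.notMem_support_iff.1 hn]
    _ = ∑ n ∈ s, ‖a n‖ ^ 2 * t ^ (2 * n) := Finset.sum_congr rfl fun n hn ↦ by
        rw [hcoeff, if_pos hn, norm_mul, norm_pow, norm_real, mul_pow, ← pow_mul, mul_comm n,
          pow_mul, Real.norm_eq_abs, sq_abs, ← pow_mul]

theorem hasSum_sq_norm_mul_pow_circleAverage {a : ℕ → ℂ} {f : ℂ → ℂ} {t : ℝ}
    (hf : ∀ z ∈ sphere (0 : ℂ) |t|, HasSum (fun n ↦ a n * z ^ n) (f z)) :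
    HasSum (fun n ↦ ‖a n‖ ^ 2 * t ^ (2 * n)) (Real.circleAverage (fun z ↦ ‖f z‖ ^ 2) 0 t) := by
  have hmem (θ : ℝ) : circleMap 0 t θ ∈ sphere (0 : ℂ) |t| := circleMap_mem_sphere' 0 t θ
  have hnorm (θ : ℝ) (n : ℕ) : ‖a n * circleMap 0 t θ ^ n‖ = ‖a n‖ * |t| ^ n := by
    rw [norm_mul, norm_pow, mem_sphere_zero_iff_norm.1 (hmem θ)]
  have hsum : Summable fun n ↦ ‖a n‖ * |t| ^ n :=
    (hf _ (hmem 0)).summable.norm.congr (hnorm 0)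
  suffices Tendsto (fun s ↦ Real.circleAverage (fun z ↦ ‖∑ n ∈ s, a n * z ^ n‖ ^ 2) 0 t) atTop
      (𝓝 (Real.circleAverage (fun z ↦ ‖f z‖ ^ 2) 0 t)) by
    simpa only [HasSum, SummationFilter.unconditional_filter,
      circleAverage_sq_norm_sum_mul_pow] using this
  simp only [Real.circleAverage_def]
  refine (intervalIntegral.tendsto_integral_filter_of_dominated_convergence
    (fun _ ↦ (∑' n, ‖a n‖ * |t| ^ n) ^ 2) (.of_forall fun s ↦ ?_) (.of_forall fun s ↦ ?_)
    intervalIntegrable_const ?_).const_smul _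
  · exact Continuous.aestronglyMeasurable (by fun_prop)
  · refine .of_forall fun θ _ ↦ ?_
    rw [norm_pow, norm_norm]
    gcongr
    calc ‖∑ n ∈ s, a n * circleMap 0 t θ ^ n‖ ≤ ∑ n ∈ s, ‖a n‖ * |t| ^ n := by
          simpa only [hnorm] using norm_sum_le s fun n ↦ a n * circleMap 0 t θ ^ n
      _ ≤ ∑' n, ‖a n‖ * |t| ^ n := hsum.sum_le_tsum s fun n _ ↦ by positivity
  · exact .of_forall fun θ _ ↦ (hf _ (hmem θ)).norm.pow 2

end Parseval

section Ellipse

open Metric Set MeasureTheory ComplexConjugate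

/-- The real-linear map `w ↦ w - β * conj w`, which carries an ellipse to a circle. -/
noncomputable def subMulConj (β : ℂ) : ℂ →L[ℝ] ℂ :=
  ContinuousLinearMap.id ℝ ℂ - β • (conjCLE : ℂ →L[ℝ] ℂ)

theorem subMulConj_apply (β w : ℂ) : subMulConj β w = w - β * conj w := rfl

theorem det_subMulConj (β : ℂ) : (subMulConj β).det = 1 - ‖β‖ ^ 2 := by
  rw [ContinuousLinearMap.det, ← LinearMap.det_toMatrix basisOneI, Matrix.det_fin_two]
  simp only [LinearMap.toMatrix_apply, coe_basisOneI_repr, coe_basisOneI,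
    ContinuousLinearMap.coe_coe, subMulConj_apply, ← normSq_eq_norm_sq, normSq_apply]
  simp only [Nat.succ_eq_add_one, Nat.reduceAdd, Fin.isValue, Matrix.cons_val_zero, map_one,
    mul_one, sub_re, one_re, sub_im, one_im, zero_sub, Matrix.cons_val_one,
    Matrix.cons_val_fin_one, conj_I, mul_neg, sub_neg_eq_add, add_re, I_re, mul_re, mul_zero,
    I_im, zero_add, add_im, mul_im, add_zero, neg_mul, neg_neg]
  ring

theorem isPreconnected_compl_preimage_subMulConj {β : ℂ} (hβ : ‖β‖ < 1) (c : ℂ) (r : ℝ) :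
    IsPreconnected (subMulConj β ⁻¹' closedBall c r)ᶜ := by
  have hdet : (subMulConj β).det ≠ 0 := by
    rw [det_subMulConj]
    nlinarith [norm_nonneg β]
  let e := (LinearMap.equivOfDetNeZero (subMulConj β : ℂ →ₗ[ℝ] ℂ) hdet).toContinuousLinearEquiv
  rw [← preimage_compl]
  exact e.toHomeomorph.isPreconnected_preimage.2
    (isPreconnected_compl_closedBall (by simp [rank_real_complex]) c r)

theorem isBounded_preimage_subMulConj {β : ℂ} (hβ : ‖β‖ < 1) (c : ℂ) (r : ℝ) :
    Bornology.IsBounded (subMulConj β ⁻¹' closedBall c r) := by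
  refine isBounded_iff_forall_norm_le.2 ⟨(‖c‖ + r) / (1 - ‖β‖), fun w hw ↦ ?_⟩
  have hw_le : ‖w‖ - ‖β‖ * ‖w‖ ≤ ‖subMulConj β w‖ := by
    simpa [subMulConj_apply] using norm_sub_norm_le w (β * conj w)
  have hle : ‖subMulConj β w‖ ≤ ‖c‖ + r := norm_le_of_mem_closedBall hw
  rw [le_div_iff₀ (by linarith)]
  linarith

theorem volume_image_subMulConj {β : ℂ} (hβ : ‖β‖ ≤ 1) (A : Set ℂ) :
    volume (subMulConj β '' A) = ENNReal.ofReal (1 - ‖β‖ ^ 2) * volume A := by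
  rw [Measure.addHaar_image_continuousLinearMap, ← ContinuousLinearMap.det, det_subMulConj,
    abs_of_nonneg]
  nlinarith [norm_nonneg β]

end Ellipse

section AreaTheorem

open Metric Set Filter Topology MeasureTheory ComplexConjugate

/-- For `g z = z⁻¹ + ∑ aₙ zⁿ` univalent in the punctured disc, the area enclosed by the `g`-image
of the circle of radius `t`, with the power series truncated to the indices in `s`. -/
noncomputable def enclosedArea (a : ℕ → ℂ) (s : Finset ℕ) (t : ℝ) : ℝ :=
  Real.pi * ((t ^ 2)⁻¹ - ∑ n ∈ s, n * ‖a n‖ ^ 2 * t ^ (2 * n))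

theorem hasDerivAt_enclosedArea (a : ℕ → ℂ) (s : Finset ℕ) {t : ℝ} (ht : t ≠ 0) :
    HasDerivAt (enclosedArea a s) (-(t * (2 * Real.pi *
      ((1 + ∑ n ∈ s, ‖n * a n‖ ^ 2 * t ^ (2 * (n + 1))) / t ^ 4)))) t := by
  have hpow (n : ℕ) : HasDerivAt (fun t : ℝ ↦ n * ‖a n‖ ^ 2 * t ^ (2 * n))
      (2 / t * (‖n * a n‖ ^ 2 * t ^ (2 * n))) t := by
    refine ((hasDerivAt_pow (2 * n) t).const_mul _).congr_deriv ?_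
    rw [norm_mul, norm_natCast]
    cases n with
    | zero => simp
    | succ n =>
      rw [show 2 * (n + 1) - 1 = 2 * n + 1 by omega]
      push_cast
      field_simp
      ring
  refine ((((hasDerivAt_pow 2 t).inv (pow_ne_zero 2 ht)).sub
    (HasDerivAt.fun_sum fun n (_ : n ∈ s) ↦ hpow n)).const_mul Real.pi).congr_deriv ?_
  have hsum : ∑ n ∈ s, ‖n * a n‖ ^ 2 * t ^ (2 * (n + 1)) =
      t ^ 2 * ∑ n ∈ s, ‖n * a n‖ ^ 2 * t ^ (2 * n) := by
    rw [Finset.mul_sum]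
    exact Finset.sum_congr rfl fun n _ ↦ by ring
  rw [hsum, ← Finset.mul_sum]
  field_simp
  push_cast
  ring

variable {a : ℕ → ℂ} {b : ℂ → ℂ}

theorem hasDerivAt_inv_add (hb : ∀ z ∈ ball (0 : ℂ) 1, HasSum (fun n ↦ a n * z ^ n) (b z))
    {z : ℂ} (hz : z ∈ ball 0 1) (hz0 : z ≠ 0) :
    HasDerivAt (fun z ↦ z⁻¹ + b z) (-(z ^ 2)⁻¹ + deriv b z) z :=
  (hasDerivAt_inv hz0).add (differentiableAt_and_hasSum_mul_deriv hb hz).1.hasDerivAt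

theorem hasSum_one_add_sq_mul_deriv_inv_add
    (hb : ∀ z ∈ ball (0 : ℂ) 1, HasSum (fun n ↦ a n * z ^ n) (b z)) {z : ℂ} (hz : z ∈ ball 0 1)
    (hz0 : z ≠ 0) :
    HasSum (fun n ↦ n * a n * z ^ (n + 1)) (1 + z ^ 2 * deriv (fun z ↦ z⁻¹ + b z) z) := by
  have heq : 1 + z ^ 2 * deriv (fun z ↦ z⁻¹ + b z) z = z * (z * deriv b z) := by
    rw [(hasDerivAt_inv_add hb hz hz0).deriv]
    field
  rw [heq]
  exact ((differentiableAt_and_hasSum_mul_deriv hb hz).2.mul_left z).congr_fun fun n ↦ by ring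

theorem le_circleAverage_sq_norm_deriv_inv_add
    (hb : ∀ z ∈ ball (0 : ℂ) 1, HasSum (fun n ↦ a n * z ^ n) (b z)) (s : Finset ℕ) {t : ℝ}
    (ht0 : 0 < t) (ht1 : t < 1) :
    (1 + ∑ n ∈ s, ‖n * a n‖ ^ 2 * t ^ (2 * (n + 1))) / t ^ 4 ≤
      Real.circleAverage (fun z ↦ ‖deriv (fun z ↦ z⁻¹ + b z) z‖ ^ 2) 0 t := by
  have hnorm {z : ℂ} (hz : z ∈ sphere (0 : ℂ) |t|) : ‖z‖ = t := by
    rwa [mem_sphere_zero_iff_norm, abs_of_pos ht0] at hz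
  let e : ℕ → ℂ
    | 0 => -1
    | n + 1 => n * a n
  have he (z : ℂ) (hz : z ∈ sphere (0 : ℂ) |t|) :
      HasSum (fun n ↦ e n * z ^ n) (z ^ 2 * deriv (fun z ↦ z⁻¹ + b z) z) := by
    rw [← hasSum_nat_add_iff' 1, Finset.sum_range_one, pow_zero, mul_one, sub_neg_eq_add, add_comm]
    exact hasSum_one_add_sq_mul_deriv_inv_add hb (by rwa [mem_ball_zero_iff, hnorm hz])
      (norm_pos_iff.1 (ht0.trans_eq (hnorm hz).symm))
  have hparseval := hasSum_sq_norm_mul_pow_circleAverage he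
  have hscale : Real.circleAverage (fun z ↦ ‖z ^ 2 * deriv (fun z ↦ z⁻¹ + b z) z‖ ^ 2) 0 t =
      t ^ 4 * Real.circleAverage (fun z ↦ ‖deriv (fun z ↦ z⁻¹ + b z) z‖ ^ 2) 0 t := by
    rw [← smul_eq_mul, ← Real.circleAverage_fun_smul]
    refine Real.circleAverage_congr_sphere fun z hz ↦ ?_
    simp only [norm_mul, norm_pow, hnorm hz, smul_eq_mul]
    ring
  rw [hscale] at hparseval
  rw [div_le_iff₀' (by positivity)]
  refine le_trans (le_of_eq ?_) (sum_le_hasSum (insert 0 (s.map ⟨_, Nat.succ_injective⟩))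
    (fun n _ ↦ by positivity) hparseval)
  rw [Finset.sum_insert (by simp), Finset.sum_map]
  simp [e]

theorem enclosedArea_sub_le_volume
    (hb : ∀ z ∈ ball (0 : ℂ) 1, HasSum (fun n ↦ a n * z ^ n) (b z))
    (hinj : InjOn (fun z ↦ z⁻¹ + b z) (ball 0 1 \ {0})) (s : Finset ℕ) {ρ r : ℝ} (hρ : 0 < ρ)
    (hρr : ρ ≤ r) (hr : r < 1) :
    ENNReal.ofReal (enclosedArea a s ρ - enclosedArea a s r) ≤
      volume ((fun z ↦ z⁻¹ + b z) '' (norm ⁻¹' Ioo ρ r)) := by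
  let E' : ℝ → ℝ := fun t ↦ t * (2 * Real.pi *
    ((1 + ∑ n ∈ s, ‖n * a n‖ ^ 2 * t ^ (2 * (n + 1))) / t ^ 4))
  have hpos {t : ℝ} (ht : t ∈ Icc ρ r) : 0 < t := hρ.trans_le ht.1
  have hsub : norm ⁻¹' Ioo ρ r ⊆ (ball 0 1 \ {0} : Set ℂ) := fun z hz ↦
    ⟨mem_ball_zero_iff.2 (hz.2.trans hr), norm_pos_iff.1 (hρ.trans hz.1)⟩
  have hE' : IntervalIntegrable E' volume ρ r := by
    refine ContinuousOn.intervalIntegrable fun t ht ↦ ContinuousAt.continuousWithinAt ?_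
    rw [uIcc_of_le hρr] at ht
    have := (hpos ht).ne'
    fun_prop (disch := positivity)
  have hE : enclosedArea a s ρ - enclosedArea a s r = ∫ t in ρ..r, E' t := by
    have := intervalIntegral.integral_eq_sub_of_hasDerivAt (f := fun t ↦ -enclosedArea a s t)
      (f' := E') (fun t ht ↦ ?_) hE'
    · linarith
    rw [uIcc_of_le hρr] at ht
    exact (hasDerivAt_enclosedArea a s (hpos ht).ne').neg.congr_deriv (neg_neg _)
  rw [hE, intervalIntegral.integral_of_le hρr, integral_Ioc_eq_integral_Ioo,
    ofReal_integral_eq_lintegral_ofReal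
      ((intervalIntegrable_iff_integrableOn_Ioo_of_le hρr).1 hE')
      (ae_restrict_of_forall_mem measurableSet_Ioo fun t ht ↦ ?_),
    volume_image_annulus hρ.le (fun z hz ↦ (hasDerivAt_inv_add hb (hsub hz).1
      (hsub hz).2).differentiableAt.differentiableWithinAt) (hinj.mono hsub)]
  · refine setLIntegral_mono' measurableSet_Ioo fun t ht ↦ ENNReal.ofReal_le_ofReal ?_
    have ht0 := hpos (Ioo_subset_Icc_self ht)
    simp only [E']
    gcongr
    exact le_circleAverage_sq_norm_deriv_inv_add hb s ht0 (ht.2.trans hr)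
  · have ht0 := hpos (Ioo_subset_Icc_self ht)
    simp only [Pi.zero_apply, E']
    positivity

-- For `‖z‖ = ρ`, `conj z⁻¹ = z / ρ ^ 2`, so `β = a 1 * ρ ^ 2` cancels the linear term of `b`.
theorem exists_norm_subMulConj_sub_le
    (hb : ∀ z ∈ ball (0 : ℂ) 1, HasSum (fun n ↦ a n * z ^ n) (b z)) :
    ∃ C, ∀ ρ, 0 < ρ → ρ ≤ 1 / 2 → ∀ z ∈ sphere (0 : ℂ) ρ,
      ‖subMulConj (a 1 * ρ ^ 2) (z⁻¹ + b z) - subMulConj (a 1 * ρ ^ 2) (a 0)‖ ≤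
        ρ⁻¹ + C * ρ ^ 2 := by
  obtain ⟨C₁, -, hC₁⟩ := exists_norm_sub_sum_range_le hb 1 (r := 1 / 2) (by norm_num) (by norm_num)
  obtain ⟨C₂, -, hC₂⟩ := exists_norm_sub_sum_range_le hb 2 (r := 1 / 2) (by norm_num) (by norm_num)
  refine ⟨C₂ + ‖a 1‖ * C₁, fun ρ hρ0 hρ z hz ↦ ?_⟩
  rw [mem_sphere_zero_iff_norm] at hz
  have h₁ : ‖b z - a 0‖ ≤ C₁ * ρ := by
    simpa [hz] using hC₁ z (hz.trans_le hρ)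
  have h₂ : ‖b z - (a 0 + a 1 * z)‖ ≤ C₂ * ρ ^ 2 := by
    simpa [hz, Finset.sum_range_succ] using hC₂ z (hz.trans_le hρ)
  have hcancel : a 1 * ρ ^ 2 * conj z⁻¹ = a 1 * z := by
    have hz0 : z ≠ 0 := norm_pos_iff.1 (hρ0.trans_eq hz.symm)
    rw [map_inv₀, ← hz, ← conj_mul', mul_assoc, mul_rotate,
      inv_mul_cancel_right₀ ((map_ne_zero _).2 hz0)]
  have heq : subMulConj (a 1 * ρ ^ 2) (z⁻¹ + b z) - subMulConj (a 1 * ρ ^ 2) (a 0) =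
      z⁻¹ + (b z - (a 0 + a 1 * z)) - a 1 * ρ ^ 2 * conj (b z - a 0) := by
    simp only [subMulConj_apply, map_add, map_sub]
    linear_combination -hcancel
  calc _ ≤ ‖z⁻¹‖ + ‖b z - (a 0 + a 1 * z)‖ + ‖a 1 * ρ ^ 2 * conj (b z - a 0)‖ := by
        rw [heq]
        exact (norm_sub_le _ _).trans (add_le_add_left (norm_add_le _ _) _)
    _ = ρ⁻¹ + ‖b z - (a 0 + a 1 * z)‖ + ‖a 1‖ * ρ ^ 2 * ‖b z - a 0‖ := by
        rw [norm_inv, hz, norm_mul, norm_conj, norm_mul, norm_pow, norm_real,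
          Real.norm_of_nonneg hρ0.le]
    _ ≤ ρ⁻¹ + C₂ * ρ ^ 2 + ‖a 1‖ * ρ ^ 2 * (C₁ * ρ) := by gcongr
    _ ≤ ρ⁻¹ + (C₂ + ‖a 1‖ * C₁) * ρ ^ 2 := by
        have : 0 ≤ C₁ := by nlinarith [norm_nonneg (b z - a 0)]
        have : ‖a 1‖ * ρ ^ 2 * (C₁ * ρ) ≤ ‖a 1‖ * ρ ^ 2 * (C₁ * 1) := by
          gcongr
          linarith
        linarith

theorem tendsto_inv_add_cobounded (hb : ContinuousAt b 0) :
    Tendsto (fun z ↦ z⁻¹ + b z) (𝓝[≠] 0) (Bornology.cobounded ℂ) := by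
  rw [← tendsto_norm_atTop_iff_cobounded]
  refine tendsto_atTop_mono (fun z ↦ norm_sub_le_norm_add z⁻¹ (b z)) ?_
  simp only [sub_eq_add_neg]
  exact tendsto_norm_inv_nhdsNE_zero_atTop.atTop_add
    (hb.norm.neg.tendsto.mono_left nhdsWithin_le_nhds)

theorem mul_enclosedArea_sub_le
    (hb : ∀ z ∈ ball (0 : ℂ) 1, HasSum (fun n ↦ a n * z ^ n) (b z))
    (hinj : InjOn (fun z ↦ z⁻¹ + b z) (ball 0 1 \ {0})) (s : Finset ℕ) {β : ℂ} (hβ : ‖β‖ < 1)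
    {c : ℂ} {ρ r R : ℝ} (hρ : 0 < ρ) (hρr : ρ ≤ r) (hr : r < 1)
    (hsphere : ∀ z ∈ sphere (0 : ℂ) ρ, ‖subMulConj β (z⁻¹ + b z) - c‖ ≤ R) :
    (1 - ‖β‖ ^ 2) * (enclosedArea a s ρ - enclosedArea a s r) ≤ Real.pi * R ^ 2 := by
  set g : ℂ → ℂ := fun z ↦ z⁻¹ + b z
  have hρ1 : ρ < 1 := hρr.trans_lt hr
  have hR : 0 ≤ R := (norm_nonneg _).trans (hsphere ρ (by simp [hρ.le]))
  have hβ2 : 0 ≤ 1 - ‖β‖ ^ 2 := by nlinarith [norm_nonneg β]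
  have hg : DifferentiableOn ℂ g (ball 0 1 \ {0}) := fun z hz ↦
    (hasDerivAt_inv_add hb hz.1 hz.2).differentiableAt.differentiableWithinAt
  have hpole : Tendsto g (𝓝[≠] 0) (Bornology.cobounded ℂ) := tendsto_inv_add_cobounded
    (differentiableAt_and_hasSum_mul_deriv hb (mem_ball_self one_pos)).1.continuousAt
  have hmaps : MapsTo g (ball 0 1 \ ball 0 ρ) (subMulConj β ⁻¹' closedBall c R) :=
    mapsTo_diff_ball_of_tendsto_cobounded hρ isOpen_ball (closedBall_subset_ball hρ1) hg hinj hpole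
      (isBounded_preimage_subMulConj hβ c R) (isPreconnected_compl_preimage_subMulConj hβ c R)
      fun z hz ↦ mem_closedBall_iff_norm.2 (hsphere z hz)
  have hsub : subMulConj β '' (g '' (norm ⁻¹' Ioo ρ r)) ⊆ closedBall c R := by
    rw [image_subset_iff, image_subset_iff]
    exact fun z hz ↦ hmaps ⟨by simpa using hz.2.trans hr, by simpa using hz.1.le⟩
  rw [← ENNReal.ofReal_le_ofReal_iff (by positivity), ENNReal.ofReal_mul hβ2]
  calc _ ≤ ENNReal.ofReal (1 - ‖β‖ ^ 2) * volume (g '' (norm ⁻¹' Ioo ρ r)) := by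
        gcongr
        exact enclosedArea_sub_le_volume hb hinj s hρ hρr hr
    _ = volume (subMulConj β '' (g '' (norm ⁻¹' Ioo ρ r))) := (volume_image_subMulConj hβ.le _).symm
    _ ≤ volume (closedBall c R) := measure_mono hsub
    _ = ENNReal.ofReal (Real.pi * R ^ 2) := by
        rw [Complex.volume_closedBall, mul_comm, ENNReal.ofReal_mul Real.pi_pos.le,
          ENNReal.ofReal_pow hR, ← NNReal.coe_real_pi, ENNReal.ofReal_coe_nnreal]

theorem enclosedArea_nonneg
    (hb : ∀ z ∈ ball (0 : ℂ) 1, HasSum (fun n ↦ a n * z ^ n) (b z))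
    (hinj : InjOn (fun z ↦ z⁻¹ + b z) (ball 0 1 \ {0})) (s : Finset ℕ) {r : ℝ} (hr0 : 0 < r)
    (hr1 : r < 1) : 0 ≤ enclosedArea a s r := by
  obtain ⟨C, hC⟩ := exists_norm_subMulConj_sub_le hb
  let S : ℝ → ℝ := fun ρ ↦ ∑ n ∈ s, n * ‖a n‖ ^ 2 * ρ ^ (2 * n)
  let error : ℝ → ℝ := fun ρ ↦
    2 * C * ρ + C ^ 2 * ρ ^ 4 + ‖a 1‖ ^ 2 * ρ ^ 2 + (1 - ‖a 1‖ ^ 2 * ρ ^ 4) * S ρ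
  have herror : Tendsto (fun ρ ↦ Real.pi * error ρ) (𝓝[>] 0) (𝓝 0) := by
    have hS : S 0 = 0 := Finset.sum_eq_zero fun n _ ↦ by cases n <;> simp
    have : Continuous fun ρ ↦ Real.pi * error ρ := by fun_prop
    simpa [error, hS] using (this.tendsto 0).mono_left nhdsWithin_le_nhds
  have harea : Tendsto (fun ρ ↦ (1 - ‖a 1‖ ^ 2 * ρ ^ 4) * -enclosedArea a s r) (𝓝[>] 0)
      (𝓝 (-enclosedArea a s r)) := by
    have : Continuous fun ρ : ℝ ↦ (1 - ‖a 1‖ ^ 2 * ρ ^ 4) * -enclosedArea a s r := by fun_prop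
    simpa using (this.tendsto 0).mono_left nhdsWithin_le_nhds
  have hβ : ∀ᶠ ρ : ℝ in 𝓝[>] 0, ‖a 1 * ρ ^ 2‖ < 1 := by
    have : Continuous fun ρ : ℝ ↦ ‖a 1 * ρ ^ 2‖ := by fun_prop
    exact nhdsWithin_le_nhds (this.continuousAt.eventually_lt_const (by simp))
  refine neg_nonpos.1 (le_of_tendsto_of_tendsto harea herror ?_)
  filter_upwards [hβ, Ioo_mem_nhdsGT hr0, Ioo_mem_nhdsGT one_half_pos] with ρ hβρ hρr hρ
  have hle := mul_enclosedArea_sub_le hb hinj s hβρ hρ.1 hρr.2.le hr1 (hC ρ hρ.1 hρ.2.le)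
  have hnorm : ‖a 1 * ρ ^ 2‖ ^ 2 = ‖a 1‖ ^ 2 * ρ ^ 4 := by
    rw [norm_mul, norm_pow, norm_real, Real.norm_of_nonneg hρ.1.le]
    ring
  rw [hnorm] at hle
  have hρ0 := hρ.1.ne'
  have hexpand : Real.pi * (ρ⁻¹ + C * ρ ^ 2) ^ 2 - (1 - ‖a 1‖ ^ 2 * ρ ^ 4) * enclosedArea a s ρ =
      Real.pi * error ρ := by
    simp only [enclosedArea, error, S]
    field
  linarith

theorem gronwall_area_theorem
    (hb : ∀ z ∈ ball (0 : ℂ) 1, HasSum (fun n ↦ a n * z ^ n) (b z))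
    (hinj : InjOn (fun z ↦ z⁻¹ + b z) (ball 0 1 \ {0})) (s : Finset ℕ) :
    ∑ n ∈ s, n * ‖a n‖ ^ 2 ≤ 1 := by
  have hcont : ContinuousAt (fun r ↦ (r ^ 2)⁻¹ - ∑ n ∈ s, n * ‖a n‖ ^ 2 * r ^ (2 * n)) (1 : ℝ) := by
    fun_prop (disch := simp)
  have hlim := hcont.tendsto.mono_left (nhdsWithin_le_nhds (s := Iio 1))
  have hnonneg := ge_of_tendsto hlim (b := 0) (by
    filter_upwards [Ioo_mem_nhdsLT one_pos] with r hr using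
      nonneg_of_mul_nonneg_right (enclosedArea_nonneg hb hinj s hr.1 hr.2) Real.pi_pos)
  simpa using hnonneg

end AreaTheorem

section SquareRootTransform

open Metric Set Filter Topology

theorem exists_differentiableOn_exp_eq {F : ℂ → ℂ} {c : ℂ} {r : ℝ}
    (hF : DifferentiableOn ℂ F (ball c r)) (hF0 : ∀ z ∈ ball c r, F z ≠ 0) :
    ∃ L, DifferentiableOn ℂ L (ball c r) ∧ ∀ z ∈ ball c r, exp (L z) = F z := by
  obtain ⟨L, hLc, hL⟩ := (((hF.deriv isOpen_ball).div hF hF0).isExactOn_ball).with_val_at c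
    (log (F c))
  have hL' : DifferentiableOn ℂ L (ball c r) := fun z hz ↦
    (hL z hz).differentiableAt.differentiableWithinAt
  refine ⟨L, hL', fun z hz ↦ ?_⟩
  have hc : c ∈ ball c r := mem_ball_self (pos_of_mem_ball hz)
  have hderiv : (ball c r).EqOn (deriv (F * fun z ↦ exp (-L z))) 0 := fun w hw ↦ by
    rw [((hF.hasDerivAt (isOpen_ball.mem_nhds hw)).mul (hL w hw).fun_neg.cexp).deriv,
      Pi.div_apply, Pi.zero_apply]
    field [hF0 w hw]
  have hconst := isOpen_ball.is_const_of_deriv_eq_zero (convex_ball c r).isPreconnected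
    (hF.mul hL'.fun_neg.cexp) hderiv hz hc
  rwa [Pi.mul_apply, Pi.mul_apply, exp_neg, exp_neg, hLc, exp_log (hF0 c hc),
    mul_inv_cancel₀ (hF0 c hc), mul_inv_eq_one₀ (exp_ne_zero _), eq_comm] at hconst

/-- The class `𝒮` of normalised univalent functions on the unit disc. -/
structure IsSchlicht (f : ℂ → ℂ) : Prop where
  differentiableOn : DifferentiableOn ℂ f (ball 0 1)
  injOn : InjOn f (ball 0 1)
  map_zero : f 0 = 0
  deriv_zero : deriv f 0 = 1

theorem IsSchlicht.exists_one_add_mul_sq_mul_eq {f : ℂ → ℂ} (hf : IsSchlicht f) :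
    ∃ q, DifferentiableOn ℂ q (ball 0 1) ∧ ∀ z ∈ ball 0 1, (1 + z * q z) ^ 2 * f z = z := by
  have hball : ball (0 : ℂ) 1 ∈ 𝓝 0 := ball_mem_nhds 0 one_pos
  have hzero : (0 : ℂ) ∈ ball 0 1 := mem_ball_self one_pos
  have hmul (z : ℂ) : z * dslope f 0 z = f z := by
    simpa using sub_smul_dslope_of_zero hf.map_zero z
  have hne : ∀ z ∈ ball 0 1, dslope f 0 z ≠ 0 := by
    intro z hz h
    have hfz : f z = f 0 := by rw [← hmul, h, mul_zero, hf.map_zero]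
    rw [hf.injOn hz hzero hfz, dslope_same, hf.deriv_zero] at h
    exact one_ne_zero h
  obtain ⟨L, hL, hexp⟩ := exists_differentiableOn_exp_eq
    ((differentiableOn_dslope hball).2 hf.differentiableOn) hne
  let u : ℂ → ℂ := fun z ↦ exp (-L z / 2) / exp (-L 0 / 2)
  have hu_sq {z : ℂ} (hz : z ∈ ball 0 1) : u z ^ 2 * dslope f 0 z = 1 := by
    have hL0 : exp (L 0) = 1 := by rw [hexp 0 hzero, dslope_same, hf.deriv_zero]
    simp only [u, div_pow, ← exp_nat_mul, Nat.cast_two, mul_div_cancel₀ _ (two_ne_zero' ℂ), exp_neg,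
      hL0, hexp z hz, inv_one, div_one, inv_mul_cancel₀ (hne z hz)]
  have hu : DifferentiableOn ℂ u (ball 0 1) := (hL.fun_neg.div_const 2).cexp.div_const _
  refine ⟨dslope u 0, (differentiableOn_dslope hball).2 hu, fun z hz ↦ ?_⟩
  have hu_eq : 1 + z * dslope u 0 z = u z := by
    have := sub_smul_dslope u 0 z
    rw [sub_zero, smul_eq_mul, show u 0 = 1 from div_self (exp_ne_zero _)] at this
    rw [this, add_sub_cancel]
  rw [hu_eq, ← hmul, mul_left_comm, hu_sq hz, mul_one]

theorem injOn_inv_add_mul_comp_sq {f q : ℂ → ℂ} (hf : InjOn f (ball 0 1))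
    (hq : ∀ z ∈ ball 0 1, (1 + z * q z) ^ 2 * f z = z) :
    InjOn (fun z ↦ z⁻¹ + z * q (z ^ 2)) (ball 0 1 \ {0}) := by
  have hsq {z : ℂ} (hz : z ∈ ball 0 1) : z ^ 2 ∈ ball 0 1 :=
    sq z ▸ (Subsemigroup.unitBall ℂ).mul_mem hz hz
  have hgf {z : ℂ} (hz : z ∈ ball (0 : ℂ) 1 \ {0}) : (z⁻¹ + z * q (z ^ 2)) ^ 2 * f (z ^ 2) = 1 := by
    have hz0 : z ≠ 0 := hz.2
    have := hq _ (hsq hz.1)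
    field_simp
    linear_combination this
  intro z hz w hw (hzw : z⁻¹ + z * q (z ^ 2) = w⁻¹ + w * q (w ^ 2))
  have hg0 : w⁻¹ + w * q (w ^ 2) ≠ 0 := by
    intro h
    simpa [h] using hgf hw
  have hsq_eq : z ^ 2 = w ^ 2 := by
    refine hf (hsq hz.1) (hsq hw.1) (mul_left_cancel₀ (pow_ne_zero 2 hg0) ?_)
    rw [hgf hw, ← hzw, hgf hz]
  rcases sq_eq_sq_iff_eq_or_eq_neg.1 hsq_eq with h | rfl
  · exact h
  · refine absurd ?_ hg0
    rw [neg_sq, inv_neg] at hzw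
    linear_combination -hzw / 2

theorem sum_sq_norm_le_one_of_injOn {q : ℂ → ℂ} {c : ℕ → ℂ}
    (hc : ∀ z ∈ ball (0 : ℂ) 1, HasSum (fun n ↦ c n * z ^ n) (q z))
    (hinj : InjOn (fun z ↦ z⁻¹ + z * q (z ^ 2)) (ball 0 1 \ {0})) (s : Finset ℕ) :
    ∑ n ∈ s, ‖c n‖ ^ 2 ≤ 1 := by
  let odd : ℕ ↪ ℕ := ⟨fun n ↦ 2 * n + 1, fun m n h ↦ by simpa using h⟩
  have hodd (n : ℕ) : odd n = 2 * n + 1 := rfl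
  have hb (z : ℂ) (hz : z ∈ ball 0 1) :
      HasSum (fun n ↦ Function.extend odd c 0 n * z ^ n) (z * q (z ^ 2)) := by
    have hz2 : z ^ 2 ∈ ball 0 1 := sq z ▸ (Subsemigroup.unitBall ℂ).mul_mem hz hz
    refine (odd.injective.hasSum_iff fun n hn ↦ ?_).1 (((hc _ hz2).mul_left z).congr_fun fun n ↦ ?_)
    · rw [Function.extend_apply' _ _ _ hn, Pi.zero_apply, zero_mul]
    · rw [Function.comp_apply, odd.injective.extend_apply, hodd]
      ring
  calc ∑ n ∈ s, ‖c n‖ ^ 2 ≤ ∑ n ∈ s, (odd n : ℝ) * ‖Function.extend odd c 0 (odd n)‖ ^ 2 := by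
        gcongr with n
        rw [odd.injective.extend_apply]
        exact le_mul_of_one_le_left (by positivity) (by simp [hodd])
    _ = ∑ n ∈ s.map odd, n * ‖Function.extend odd c 0 n‖ ^ 2 := by rw [Finset.sum_map]
    _ ≤ 1 := gronwall_area_theorem hb hinj _

theorem sq_norm_mul_one_sub_le_of_hasSum {c : ℕ → ℂ} {C : ℝ}
    (hC : ∀ s : Finset ℕ, ∑ n ∈ s, ‖c n‖ ^ 2 ≤ C) {z w : ℂ} (hz : ‖z‖ < 1)
    (hw : HasSum (fun n ↦ c n * z ^ n) w) : ‖w‖ ^ 2 * (1 - ‖z‖ ^ 2) ≤ C := by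
  have hz2 : ‖z‖ ^ 2 < 1 := pow_lt_one₀ (norm_nonneg z) hz two_ne_zero
  have hC0 : 0 ≤ C := by simpa using hC ∅
  rw [← le_div_iff₀ (sub_pos.2 hz2)]
  refine le_of_tendsto (hw.norm.pow 2) (Eventually.of_forall fun s ↦ ?_)
  calc ‖∑ n ∈ s, c n * z ^ n‖ ^ 2 ≤ (∑ n ∈ s, ‖c n‖ * ‖z‖ ^ n) ^ 2 := by
        gcongr
        exact (norm_sum_le _ _).trans_eq (by simp only [norm_mul, norm_pow])
    _ ≤ (∑ n ∈ s, ‖c n‖ ^ 2) * ∑ n ∈ s, (‖z‖ ^ n) ^ 2 := Finset.sum_mul_sq_le_sq_mul_sq _ _ _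
    _ = (∑ n ∈ s, ‖c n‖ ^ 2) * ∑ n ∈ s, (‖z‖ ^ 2) ^ n := by simp only [← pow_mul, mul_comm]
    _ ≤ C * (1 - ‖z‖ ^ 2)⁻¹ := by
        gcongr
        · exact hC s
        · exact sum_le_hasSum s (fun n _ ↦ by positivity)
            (hasSum_geometric_of_lt_one (by positivity) hz2)
    _ = C / (1 - ‖z‖ ^ 2) := (div_eq_mul_inv _ _).symm

theorem IsSchlicht.exists_one_add_mul_sq_mul_eq_and_norm_le {f : ℂ → ℂ} (hf : IsSchlicht f) {z : ℂ}
    (hz : z ∈ ball 0 1) :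
    ∃ w, (1 + z * w) ^ 2 * f z = z ∧ ‖w‖ ^ 2 * (1 - ‖z‖ ^ 2) ≤ 1 := by
  obtain ⟨q, hq, hqf⟩ := hf.exists_one_add_mul_sq_mul_eq
  have hc (z : ℂ) (hz : z ∈ ball 0 1) :
      HasSum (fun n ↦ (n.factorial : ℂ)⁻¹ * iteratedDeriv n q 0 * z ^ n) (q z) :=
    (hasSum_taylorSeries_on_ball hq hz).congr_fun fun n ↦ by
      rw [sub_zero, smul_eq_mul, smul_eq_mul]
      ring
  exact ⟨q z, hqf z hz, sq_norm_mul_one_sub_le_of_hasSum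
    (sum_sq_norm_le_one_of_injOn hc (injOn_inv_add_mul_comp_sq hf.injOn hqf))
    (mem_ball_zero_iff.1 hz) (hc z hz)⟩

theorem IsSchlicht.growth {f : ℂ → ℂ} (hf : IsSchlicht f) {z : ℂ} (hz : z ∈ ball 0 1) {ρ : ℝ}
    (hρ : ρ ∈ Icc 0 1) (hzρ : ‖z‖ ^ 2 ≤ ρ ^ 2 * (1 - ‖z‖ ^ 2)) :
    (1 - ρ) ^ 2 * ‖f z‖ ≤ ‖z‖ ∧ ‖z‖ ≤ (1 + ρ) ^ 2 * ‖f z‖ := by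
  obtain ⟨w, hwf, hw⟩ := hf.exists_one_add_mul_sq_mul_eq_and_norm_le hz
  have hzw : ‖z * w‖ ≤ ρ := by
    refine (sq_le_sq₀ (norm_nonneg _) hρ.1).1 ?_
    calc ‖z * w‖ ^ 2 = ‖z‖ ^ 2 * ‖w‖ ^ 2 := by rw [norm_mul, mul_pow]
      _ ≤ ρ ^ 2 * (1 - ‖z‖ ^ 2) * ‖w‖ ^ 2 := by gcongr
      _ = ρ ^ 2 * (‖w‖ ^ 2 * (1 - ‖z‖ ^ 2)) := by ring
      _ ≤ ρ ^ 2 := mul_le_of_le_one_right (sq_nonneg ρ) hw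
  have hnorm : ‖1 + z * w‖ ^ 2 * ‖f z‖ = ‖z‖ := by rw [← norm_pow, ← norm_mul, hwf]
  have hlower : 1 - ρ ≤ ‖1 + z * w‖ := by
    have := norm_sub_le_norm_add 1 (z * w)
    rw [norm_one] at this
    linarith
  have hupper : ‖1 + z * w‖ ≤ 1 + ρ := by
    have := norm_add_le 1 (z * w)
    rw [norm_one] at this
    linarith
  have hρ1 : 0 ≤ 1 - ρ := sub_nonneg.2 hρ.2
  constructor
  · calc (1 - ρ) ^ 2 * ‖f z‖ ≤ ‖1 + z * w‖ ^ 2 * ‖f z‖ := by gcongr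
      _ = ‖z‖ := hnorm
  · calc ‖z‖ = ‖1 + z * w‖ ^ 2 * ‖f z‖ := hnorm.symm
      _ ≤ (1 + ρ) ^ 2 * ‖f z‖ := by gcongr

end SquareRootTransform

section Disc

open Metric Set ComplexConjugate

variable {c : ℂ} {R : ℝ}

/-- The conformal map of the unit disc onto `ball c R` that fixes `0`, for `‖c‖ < R`. -/
noncomputable def unitDiscToBall (c : ℂ) (R : ℝ) (z : ℂ) : ℂ :=
  (R ^ 2 - ‖c‖ ^ 2) * z / (R - conj c * z)

theorem sub_conj_mul_ne_zero (hc : ‖c‖ < R) {z : ℂ} (hz : z ∈ ball 0 1) :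
    (R : ℂ) - conj c * z ≠ 0 := by
  intro h
  have hz1 := mem_ball_zero_iff.1 hz
  have hnorm := congrArg norm (sub_eq_zero.1 h)
  rw [norm_real, norm_mul, norm_conj, Real.norm_of_nonneg ((norm_nonneg c).trans hc.le)] at hnorm
  nlinarith [norm_nonneg c, norm_nonneg z]

theorem mapsTo_unitDiscToBall (hc : ‖c‖ < R) :
    MapsTo (unitDiscToBall c R) (ball 0 1) (ball c R) := by
  intro z hz
  have hden := sub_conj_mul_ne_zero hc hz
  have hz1 := mem_ball_zero_iff.1 hz
  have hsub : unitDiscToBall c R z - c = R * ((R * z - c) / (R - conj c * z)) := by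
    rw [unitDiscToBall, div_sub' hden, mul_div_assoc', div_left_inj' hden]
    linear_combination z * mul_conj' c
  have hsq : ‖R - conj c * z‖ ^ 2 - ‖R * z - c‖ ^ 2 = (R ^ 2 - ‖c‖ ^ 2) * (1 - ‖z‖ ^ 2) := by
    simp only [← normSq_eq_norm_sq, normSq_apply, sub_re, sub_im, mul_re, mul_im, conj_re, conj_im,
      ofReal_re, ofReal_im]
    ring
  have hlt : ‖R * z - c‖ < ‖R - conj c * z‖ := by
    refine lt_of_pow_lt_pow_left₀ 2 (norm_nonneg _) (sub_pos.1 (hsq ▸ mul_pos ?_ ?_)) <;>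
      nlinarith [norm_nonneg c, norm_nonneg z]
  have hR : 0 < R := (norm_nonneg c).trans_lt hc
  rw [mem_ball_iff_norm, hsub, norm_mul, norm_real, Real.norm_of_nonneg hR.le, norm_div]
  exact mul_lt_of_lt_one_right hR ((div_lt_one (norm_pos_iff.2 hden)).2 hlt)

theorem ofReal_sq_sub_sq_norm_ne_zero (hc : ‖c‖ < R) : (R : ℂ) ^ 2 - ‖c‖ ^ 2 ≠ 0 := by
  norm_cast
  nlinarith [norm_nonneg c]

theorem injOn_unitDiscToBall (hc : ‖c‖ < R) : InjOn (unitDiscToBall c R) (ball 0 1) := by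
  intro z hz w hw h
  have hR : (R : ℂ) ≠ 0 := ofReal_ne_zero.2 ((norm_nonneg c).trans_lt hc).ne'
  rw [unitDiscToBall, unitDiscToBall,
    div_eq_div_iff (sub_conj_mul_ne_zero hc hz) (sub_conj_mul_ne_zero hc hw)] at h
  refine mul_left_cancel₀ (mul_ne_zero (ofReal_sq_sub_sq_norm_ne_zero hc) hR) ?_
  linear_combination h

theorem differentiableOn_unitDiscToBall (hc : ‖c‖ < R) :
    DifferentiableOn ℂ (unitDiscToBall c R) (ball 0 1) :=
  DifferentiableOn.div (by fun_prop) (by fun_prop) fun _ ↦ sub_conj_mul_ne_zero hc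

theorem unitDiscToBall_zero (c : ℂ) (R : ℝ) : unitDiscToBall c R 0 = 0 := by
  rw [unitDiscToBall, mul_zero, zero_div]

theorem hasDerivAt_unitDiscToBall_zero (hR : R ≠ 0) :
    HasDerivAt (unitDiscToBall c R) ((R ^ 2 - ‖c‖ ^ 2) / R) 0 := by
  have hR' : (R : ℂ) ≠ 0 := ofReal_ne_zero.2 hR
  refine (((hasDerivAt_id' (0 : ℂ)).const_mul ((R : ℂ) ^ 2 - ‖c‖ ^ 2)).fun_div
    (((hasDerivAt_id' (0 : ℂ)).const_mul (conj c)).const_sub (R : ℂ)) (by simpa)).congr_deriv ?_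
  simp only [mul_zero, sub_zero, mul_one, zero_mul]
  field

theorem IsSchlicht.of_injOn_ball {φ : ℂ → ℂ} (hc : ‖c‖ < R)
    (hd : DifferentiableOn ℂ φ (ball c R)) (hinj : InjOn φ (ball c R)) (h0 : φ 0 = 0)
    (h1 : deriv φ 0 = 1) :
    IsSchlicht fun z ↦ R / (R ^ 2 - ‖c‖ ^ 2) * φ (unitDiscToBall c R z) := by
  have hR : R ≠ 0 := ((norm_nonneg c).trans_lt hc).ne'
  have hR' : (R : ℂ) ≠ 0 := ofReal_ne_zero.2 hR
  have hk := ofReal_sq_sub_sq_norm_ne_zero hc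
  have hM := mapsTo_unitDiscToBall hc
  refine ⟨(hd.comp (differentiableOn_unitDiscToBall hc) hM).const_mul _, fun z hz w hw h ↦ ?_, ?_,
    ?_⟩
  · exact injOn_unitDiscToBall hc hz hw
      (hinj (hM hz) (hM hw) (mul_left_cancel₀ (div_ne_zero hR' hk) h))
  · rw [unitDiscToBall_zero, h0, mul_zero]
  · have hφ : HasDerivAt φ 1 (unitDiscToBall c R 0) := by
      rw [unitDiscToBall_zero, ← h1]
      exact (differentiableAt_of_deriv_ne_zero (by simp [h1])).hasDerivAt
    exact ((hφ.comp 0 (hasDerivAt_unitDiscToBall_zero hR)).const_mul _).deriv.trans (by field)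

end Disc

section Domain

open Metric

theorem two_pow_le_exp (n : ℕ) : (2 : ℝ) ^ n ≤ Real.exp n := by
  rw [← Real.exp_one_pow]
  gcongr
  linarith [Real.add_one_le_exp 1]

theorem four_thousand_le_exp_four_pi : 4000 ≤ Real.exp (4 * Real.pi) := calc
  (4000 : ℝ) ≤ 2 ^ 12 := by norm_num
  _ ≤ Real.exp (12 : ℕ) := two_pow_le_exp 12
  _ ≤ Real.exp (4 * Real.pi) := by
    gcongr
    push_cast
    linarith [Real.pi_gt_three]

theorem norm_Pcubic (z : ℂ) : ‖Pcubic z‖ = ‖z‖ * ‖1 + z‖ ^ 2 := by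
  rw [Pcubic, norm_mul, norm_pow]

theorem Bcomp_subset_ball : Bcomp ⊆ ball (-1) (1 / 10) := by
  refine connectedComponentIn_subset_ball_of_disjoint_sphere (by norm_num) ?_
  rw [Set.disjoint_left]
  intro z hz hPz
  have hz' : ‖1 + z‖ = 1 / 10 := by
    rwa [mem_sphere_iff_norm, sub_neg_eq_add, add_comm] at hz
  have hz_norm : 9 / 10 ≤ ‖z‖ := by
    have := norm_sub_norm_le 1 (1 + z)
    rw [hz', norm_one, sub_add_cancel_left, norm_neg] at this
    linarith
  have hexp : Real.exp (-(4 * Real.pi)) ≤ 1 / 4000 := by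
    rw [Real.exp_neg, ← one_div]
    exact one_div_le_one_div_of_le (by norm_num) four_thousand_le_exp_four_pi
  rw [Set.mem_preimage, mem_ball_zero_iff, norm_Pcubic, hz'] at hPz
  linarith

theorem ball_subset_Udom : ball (9 / 10) (9 / 5) ⊆ Udom := by
  intro z hz
  rw [mem_ball_iff_norm] at hz
  have hre : -(9 / 10) < z.re := by
    have := (abs_le.1 (abs_re_le_norm (z - 9 / 10))).1
    norm_num at this
    linarith
  have hz_norm : ‖z‖ < 27 / 10 := by
    have := norm_add_le (z - 9 / 10) (9 / 10)
    norm_num at this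
    linarith
  have hz_add : ‖1 + z‖ < 37 / 10 := by
    have := norm_add_le 1 z
    rw [norm_one] at this
    linarith
  refine ⟨?_, ?_⟩
  · rw [Set.mem_preimage, mem_ball_zero_iff, norm_Pcubic]
    calc ‖z‖ * ‖1 + z‖ ^ 2 ≤ 27 / 10 * (37 / 10) ^ 2 := by gcongr
      _ < 4 / 27 * Real.exp (4 * Real.pi) := by linarith [four_thousand_le_exp_four_pi]
  · rintro (⟨-, h⟩ | h)
    · linarith
    · have hdist := mem_ball_iff_norm.1 (Bcomp_subset_ball h)
      have := (abs_le.1 (abs_re_le_norm (z - -1))).2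
      norm_num at this hdist
      linarith

end Domain

/-- The critical point of any map in the Inou–Shishikura class lies in the closed annulus
`0.22 ≤ |z| ≤ 2`: if `φ : U → ℂ` is injective holomorphic with `φ(0) = 0`, `φ'(0) = 1`,
then `0.22 ≤ |φ(-1/3)| ≤ 2`. -/
theorem critical_point_location (φ : ℂ → ℂ)
    (hd : DifferentiableOn ℂ φ Udom) (hinj : Set.InjOn φ Udom)
    (h0 : φ 0 = 0) (h1 : deriv φ 0 = 1) :
    (0.22 : ℝ) ≤ ‖φ (-1 / 3)‖ ∧ ‖φ (-1 / 3)‖ ≤ 2 := by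
  have hf : IsSchlicht fun z ↦ (9 / 5 : ℝ) / ((9 / 5 : ℝ) ^ 2 - ‖(9 / 10 : ℂ)‖ ^ 2) *
      φ (unitDiscToBall (9 / 10) (9 / 5) z) :=
    IsSchlicht.of_injOn_ball (by norm_num) (hd.mono ball_subset_Udom) (hinj.mono ball_subset_Udom)
      h0 h1
  have hpoint : unitDiscToBall (9 / 10) (9 / 5) (-20 / 71) = -1 / 3 := by
    norm_num [unitDiscToBall, map_ofNat]
  obtain ⟨hupper, hlower⟩ := hf.growth (z := -20 / 71) (ρ := 3 / 10) (by norm_num [Metric.mem_ball])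
    (by norm_num) (by norm_num)
  rw [hpoint] at hupper hlower
  norm_num at hupper hlower ⊢
  constructor <;> linarith
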